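/- For all (x, y) ∈ ℝ², the principal value P∫_ℝ e^{i x u} e^{−i y/u} u^{−1} du exists and equals 2πi·((sgn(x) − sgn(y))/2)·J₀(2√|xy|). Moreover the uniform bound |∫_{I_{R,r}} e^{i x u} e^{−i y/u} u^{−1} du| ≤ 4π holds for all 0 < r < R and all x, y ∈ ℝ. -/

import Mathlib

open MeasureTheory Filter

/-- The 0-th Bessel function of the first kind. -/
noncomputable def J0 (z : ℝ) : ℝ :=
  ∑' n : ℕ, (-1 : ℝ) ^ n * (z / 2) ^ (2 * n) / ((Nat.factorial n : ℝ)) ^ 2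

/-- The symmetric truncated domain `I_{R,r} = [-R,-r] ∪ [r,R]`. -/
def pvSet (R r : ℝ) : Set ℝ := Set.Icc (-R) (-r) ∪ Set.Icc r R

noncomputable def arcF (p q θ : ℝ) : ℂ :=
  Complex.exp (Complex.I * p * Complex.exp (Complex.I * θ)
    - Complex.I * q * Complex.exp (-(Complex.I * θ)))

noncomputable def arcA (p q : ℝ) : ℂ := ∫ θ in (0 : ℝ)..Real.pi, arcF p q θ

lemma arcF_cont (p q : ℝ) : Continuous (arcF p q) := by
  unfold arcF; fun_prop

lemma arcF_norm (p q θ : ℝ) : ‖arcF p q θ‖ = Real.exp (-((p + q) * Real.sin θ)) := by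
  unfold arcF
  rw [Complex.norm_exp]
  congr 1
  have h1 : Complex.exp (Complex.I * θ) = Real.cos θ + Real.sin θ * Complex.I := by
    rw [mul_comm, Complex.exp_mul_I]; simp
  have h2 : Complex.exp (-(Complex.I * θ)) = Real.cos θ - Real.sin θ * Complex.I := by
    rw [show -(Complex.I * θ) = ((-θ : ℝ) : ℂ) * Complex.I by push_cast; ring, Complex.exp_mul_I]
    simp; ring
  rw [h1, h2]
  simp [-Complex.ofReal_cos, -Complex.ofReal_sin]
  ring

lemma arcA_norm_le (p q : ℝ) (h : 0 ≤ p + q) : ‖arcA p q‖ ≤ Real.pi := by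
  have := intervalIntegral.norm_integral_le_of_norm_le_const (a := 0) (b := Real.pi)
    (f := arcF p q) (C := 1) (by
      intro θ hθ
      rw [Set.uIoc_of_le Real.pi_pos.le] at hθ
      rw [arcF_norm, Real.exp_le_one_iff]
      have := Real.sin_nonneg_of_nonneg_of_le_pi hθ.1.le hθ.2
      nlinarith [mul_nonneg h this])
  simpa [arcA, abs_of_pos Real.pi_pos] using this

lemma arcA_symm (p q : ℝ) : arcA p q = arcA q p := by
  unfold arcA
  have := intervalIntegral.integral_comp_sub_left (a := 0) (b := Real.pi) (arcF q p) Real.pi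
  simp only [sub_self, sub_zero] at this
  rw [← this]
  congr 1; ext θ
  unfold arcF
  have h1 : Complex.exp (Complex.I * ((Real.pi - θ : ℝ) : ℂ)) = - Complex.exp (-(Complex.I * θ)) := by
    push_cast
    rw [show Complex.I * ((Real.pi : ℂ) - θ) = Real.pi * Complex.I + -(Complex.I * θ) by ring,
      Complex.exp_add, Complex.exp_pi_mul_I]; ring
  have h2 : Complex.exp (-(Complex.I * ((Real.pi - θ : ℝ) : ℂ))) = - Complex.exp (Complex.I * θ) := by
    rw [Complex.exp_neg, h1, Complex.exp_neg]
    field_simp [Complex.exp_ne_zero]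
  rw [h1, h2]; congr 1; ring

lemma arcA_neg (p q : ℝ) : arcA (-p) (-q) = ∫ θ in (-Real.pi)..0, arcF p q θ := by
  rw [arcA_symm]
  unfold arcA
  have := intervalIntegral.integral_comp_neg (a := 0) (b := Real.pi) (arcF p q)
  simp only [neg_zero] at this
  rw [← this]
  congr 1; ext θ
  unfold arcF
  congr 1; push_cast; ring_nf

lemma arcA_add (p q : ℝ) : arcA p q + arcA (-p) (-q) = ∫ θ in (-Real.pi)..Real.pi, arcF p q θ := by
  rw [arcA_neg, add_comm]
  exact intervalIntegral.integral_add_adjacent_intervals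
    ((arcF_cont p q).intervalIntegrable _ _) ((arcF_cont p q).intervalIntegrable _ _)

noncomputable def besK (t : ℝ) : ℝ := ∑' n : ℕ, t ^ n / ((Nat.factorial n : ℝ)) ^ 2

lemma exp_orth (n m : ℕ) : ∫ θ in (-Real.pi)..Real.pi,
    Complex.exp (Complex.I * θ) ^ n * Complex.exp (-(Complex.I * θ)) ^ m
    = if n = m then (2 * Real.pi : ℂ) else 0 := by
  have h : ∀ θ : ℝ, Complex.exp (Complex.I * θ) ^ n * Complex.exp (-(Complex.I * θ)) ^ m
      = Complex.exp ((((n : ℂ) - m) * Complex.I) * θ) := by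
    intro θ
    rw [← Complex.exp_nat_mul, ← Complex.exp_nat_mul, ← Complex.exp_add]; congr 1; ring
  simp_rw [h]
  split_ifs with hnm
  · subst hnm; simp; ring
  · have hc : ((n : ℂ) - m) * Complex.I ≠ 0 := by
      refine mul_ne_zero ?_ Complex.I_ne_zero
      rw [sub_ne_zero]; exact_mod_cast hnm
    rw [integral_exp_mul_complex hc]
    rw [div_eq_zero_iff]; left
    rw [sub_eq_zero, Complex.exp_eq_exp_iff_exists_int]
    refine ⟨n - m, ?_⟩
    push_cast; ring

lemma besK_hasSum (t : ℝ) : Summable (fun n : ℕ => t ^ n / ((Nat.factorial n : ℝ)) ^ 2) := by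
  refine Summable.of_norm_bounded (Real.summable_pow_div_factorial |t|) ?_
  intro n
  rw [norm_div, norm_pow, norm_pow, Real.norm_eq_abs, Real.norm_natCast]
  have : (1 : ℝ) ≤ Nat.factorial n := by exact_mod_cast Nat.one_le_iff_ne_zero.2 (Nat.factorial_ne_zero n)
  gcongr
  nlinarith

lemma arcF_integral (p q : ℝ) : ∫ θ in (-Real.pi)..Real.pi, arcF p q θ
    = ((2 * Real.pi * besK (p * q) : ℝ) : ℂ) := by
  let c : ℕ × ℕ → ℂ := fun z => (Complex.I * p) ^ z.1 / (Nat.factorial z.1)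
    * ((-(Complex.I * q)) ^ z.2 / (Nat.factorial z.2))
  let e : ℕ × ℕ → C(ℝ, ℂ) := fun z =>
    ⟨fun θ => c z * (Complex.exp (Complex.I * θ) ^ z.1 * Complex.exp (-(Complex.I * θ)) ^ z.2),
      by fun_prop⟩
  have hn1 : ∀ θ : ℝ, ‖Complex.exp (Complex.I * θ)‖ = 1 := fun θ => by
    rw [mul_comm]; exact Complex.norm_exp_ofReal_mul_I θ
  have hn2 : ∀ θ : ℝ, ‖Complex.exp (-(Complex.I * θ))‖ = 1 := fun θ => by
    rw [Complex.exp_neg, norm_inv, hn1, inv_one]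
  have hsum : Summable (fun z => ‖c z‖) := by
    have h1 := Real.summable_pow_div_factorial |p|
    have h2 := Real.summable_pow_div_factorial |q|
    have := h1.mul_of_nonneg h2 (fun n => by positivity) (fun n => by positivity)
    refine this.congr ?_
    intro z
    simp [c]
  have key := intervalIntegral.hasSum_integral_of_dominated_convergence
    (a := -Real.pi) (b := Real.pi) (μ := volume) (f := arcF p q) (F := fun z θ => e z θ) (fun z _ => ‖c z‖)
    (fun z => (e z).continuous.aestronglyMeasurable)
    (fun z => Eventually.of_forall (fun θ _ => by
      simp [e, hn1, hn2]))
    (Eventually.of_forall (fun θ _ => hsum))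
    (by simp)
    (Eventually.of_forall (fun θ _ => by
      have h1 := NormedSpace.expSeries_div_hasSum_exp (Complex.I * p * Complex.exp (Complex.I * θ))
      have h2 := NormedSpace.expSeries_div_hasSum_exp (-(Complex.I * q) * Complex.exp (-(Complex.I * θ)))
      rw [← Complex.exp_eq_exp_ℂ] at h1 h2
      have hfun : ∀ z : ℕ × ℕ, e z θ = (Complex.I * p * Complex.exp (Complex.I * θ)) ^ z.1 / (Nat.factorial z.1)
          * ((-(Complex.I * q) * Complex.exp (-(Complex.I * θ))) ^ z.2 / (Nat.factorial z.2)) := by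
        intro z
        simp only [e, c, ContinuousMap.coe_mk, mul_pow]
        ring
      have hs : Summable (fun z => e z θ) := by
        refine Summable.of_norm ?_
        refine hsum.congr ?_
        intro z
        simp [e, hn1, hn2]
      have h3 := HasSum.mul h1 h2 (hs.congr hfun)
      rw [← Complex.exp_add] at h3
      have h4 : arcF p q θ = Complex.exp (Complex.I * p * Complex.exp (Complex.I * θ)
          + -(Complex.I * q) * Complex.exp (-(Complex.I * θ))) := by
        unfold arcF; congr 1; ring
      rw [h4]
      simp_rw [hfun]
      exact h3))
  have hIntEq : ∀ z : ℕ × ℕ, ∫ θ in (-Real.pi)..Real.pi, e z θ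
      = if z.1 = z.2 then c z * (2 * Real.pi : ℂ) else 0 := by
    intro z
    have : ∫ θ in (-Real.pi)..Real.pi, e z θ = c z * ∫ θ in (-Real.pi)..Real.pi,
      Complex.exp (Complex.I * θ) ^ z.1 * Complex.exp (-(Complex.I * θ)) ^ z.2 := by
      rw [← intervalIntegral.integral_const_mul]; rfl
    rw [this, exp_orth]; split_ifs <;> simp
  simp_rw [hIntEq] at key
  have hinj : Function.Injective (fun n : ℕ => (n, n)) := fun a b h => by simpa using h
  have key2 := (hinj.hasSum_iff (f := fun z : ℕ × ℕ => if z.1 = z.2 then c z * (2 * Real.pi : ℂ) else 0) (by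
    rintro ⟨n, m⟩ hz
    have : n ≠ m := fun h => hz ⟨n, by simp [h]⟩
    simp [this])).2 key
  have key3 : HasSum (fun n : ℕ => ((2 * Real.pi * ((p * q) ^ n / ((Nat.factorial n : ℝ)) ^ 2) : ℝ) : ℂ))
      ((2 * Real.pi * besK (p * q) : ℝ) : ℂ) := by
    exact Complex.hasSum_ofReal.2 ((besK_hasSum (p * q)).hasSum.mul_left (2 * Real.pi))
  refine key2.unique (key3.congr_fun ?_)
  intro n
  have hI : Complex.I * p * -(Complex.I * q) = p * q := by
    linear_combination (-(p : ℂ) * q) * Complex.I_mul_I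
  simp only [Function.comp, if_true, c]
  push_cast
  rw [← hI, mul_pow]
  ring

lemma arcA_add' (p q : ℝ) : arcA p q + arcA (-p) (-q) = ((2 * Real.pi * besK (p * q) : ℝ) : ℂ) := by
  rw [arcA_add, arcF_integral]

lemma besK_zero : besK 0 = 1 := by
  unfold besK
  rw [tsum_eq_single 0 (by intro n hn; simp [hn])]
  simp

lemma J0_eq (t : ℝ) (ht : t ≤ 0) : J0 (2 * Real.sqrt |t|) = besK t := by
  unfold J0 besK
  congr 1; ext n
  rw [mul_div_cancel_left₀ _ (two_ne_zero), pow_mul, Real.sq_sqrt (abs_nonneg _), abs_of_nonpos ht,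
    ← mul_pow]
  simp

lemma besK_bound (t : ℝ) (ht : t ≤ 0) : ‖((2 * Real.pi * besK t : ℝ) : ℂ)‖ ≤ 2 * Real.pi := by
  have h := arcA_add' (Real.sqrt (-t)) (-Real.sqrt (-t))
  have e : Real.sqrt (-t) * -Real.sqrt (-t) = t := by
    have := Real.mul_self_sqrt (show 0 ≤ -t by linarith); linarith
  rw [e] at h
  rw [← h]
  refine (norm_add_le _ _).trans ?_
  have h1 := arcA_norm_le (Real.sqrt (-t)) (-Real.sqrt (-t)) (by simp)
  have h2 := arcA_norm_le (-Real.sqrt (-t)) (- -Real.sqrt (-t)) (by simp)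
  linarith

lemma arcA_atTop (x y : ℝ) (hx : 0 ≤ x) :
    Tendsto (fun R : ℝ => arcA (x * R) (y / R)) atTop (nhds (if x = 0 then (Real.pi : ℂ) else 0)) := by
  have hval : (if x = 0 then (Real.pi : ℂ) else 0)
      = ∫ θ in (0 : ℝ)..Real.pi, (if x = 0 then (1 : ℂ) else 0) := by
    split_ifs <;> simp
  rw [hval]
  unfold arcA
  have hy0 : Tendsto (fun R : ℝ => y / R) atTop (nhds 0) := tendsto_const_nhds.div_atTop tendsto_id
  refine intervalIntegral.tendsto_integral_filter_of_dominated_convergence (fun _ => Real.exp |y|)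
    (Eventually.of_forall fun R => (arcF_cont _ _).aestronglyMeasurable) ?_ (by simp) ?_
  · filter_upwards [eventually_ge_atTop 1] with R hR
    refine Eventually.of_forall fun θ hθ => ?_
    rw [Set.uIoc_of_le Real.pi_pos.le] at hθ
    rw [arcF_norm, Real.exp_le_exp]
    have h1 := Real.sin_nonneg_of_nonneg_of_le_pi hθ.1.le hθ.2
    have h2 := Real.sin_le_one θ
    have h3 : 0 ≤ x * R := by positivity
    have h4 : |y / R| ≤ |y| := by
      rw [abs_div, abs_of_pos (show 0 < R by linarith)]
      exact div_le_self (abs_nonneg _) hR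
    have h5 := neg_abs_le (y / R)
    have h6 := abs_nonneg y
    nlinarith [mul_nonneg h3 h1, mul_nonneg (show 0 ≤ y / R + |y| by linarith) h1,
      mul_nonneg h6 (show 0 ≤ 1 - Real.sin θ by linarith)]
  · have : ∀ᵐ θ : ℝ, θ ≠ Real.pi := by
      simp [ae_iff]
    filter_upwards [this] with θ hne hθ
    rw [Set.uIoc_of_le Real.pi_pos.le] at hθ
    have hs : 0 < Real.sin θ := Real.sin_pos_of_pos_of_lt_pi hθ.1 (lt_of_le_of_ne hθ.2 hne)
    split_ifs with h0
    · subst h0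
      unfold arcF
      have hc : Continuous (fun q : ℝ => Complex.exp (Complex.I * ((0 : ℝ) : ℂ) * Complex.exp (Complex.I * θ)
        - Complex.I * q * Complex.exp (-(Complex.I * θ)))) := by fun_prop
      have := (hc.tendsto 0).comp hy0
      simpa [Function.comp_def] using this
    · have hx' : 0 < x := lt_of_le_of_ne hx (Ne.symm h0)
      rw [tendsto_zero_iff_norm_tendsto_zero]
      simp_rw [arcF_norm]
      refine Real.tendsto_exp_atBot.comp ?_
      refine tendsto_neg_atTop_atBot.comp ?_
      refine Tendsto.atTop_mul_const hs ?_
      exact (tendsto_id.const_mul_atTop hx').atTop_add hy0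

lemma arcA_zero (x y : ℝ) (hy : 0 ≤ y) :
    Tendsto (fun r : ℝ => arcA (x * r) (y / r)) (nhdsWithin 0 (Set.Ioi 0))
      (nhds (if y = 0 then (Real.pi : ℂ) else 0)) := by
  have := (arcA_atTop y x hy).comp tendsto_inv_nhdsGT_zero
  refine this.congr fun r => ?_
  simp only [Function.comp]
  rw [arcA_symm, div_inv_eq_mul, div_eq_mul_inv]

noncomputable def kerT (x y R r : ℝ) : ℂ := ∫ u in pvSet R r,
          Complex.exp (Complex.I * (x : ℂ) * (u : ℂ)) *
            Complex.exp (-Complex.I * (y : ℂ) / (u : ℂ)) / (u : ℂ)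

lemma kerT_eq (x y R r : ℝ) (hr : 0 < r) (hR : r < R) :
    kerT x y R r = Complex.I * (arcA (x * r) (y / r) - arcA (x * R) (y / R)) := by
  have hR0 : 0 < R := hr.trans hR
  let h : ℝ → ℂ := fun u => Complex.exp (Complex.I * (x : ℂ) * (u : ℂ)) *
            Complex.exp (-Complex.I * (y : ℂ) / (u : ℂ)) / (u : ℂ)
  have hcont : ContinuousOn h {u | u ≠ 0} := by
    have : ∀ u ∈ {u : ℝ | u ≠ 0}, (u : ℂ) ≠ 0 := fun u hu => by exact_mod_cast hu
    have hid : ContinuousOn (fun u : ℝ => (u : ℂ)) {u | u ≠ 0} := by fun_prop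
    refine ContinuousOn.div (ContinuousOn.mul (by fun_prop) ?_) hid this
    exact Complex.continuous_exp.comp_continuousOn (continuousOn_const.div hid this)
  have hc1 : ContinuousOn h (Set.Icc r R) := hcont.mono fun u hu => (hr.trans_le hu.1).ne'
  have hc2 : ContinuousOn h (Set.Icc (-R) (-r)) := hcont.mono fun u hu => by
    have := hu.2
    exact (show u < 0 by linarith).ne
  have hsplit : kerT x y R r = (∫ u in (-R)..(-r), h u) + ∫ u in r..R, h u := by
    unfold kerT pvSet
    rw [setIntegral_union ?_ measurableSet_Icc (hc2.integrableOn_Icc) (hc1.integrableOn_Icc),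
      intervalIntegral.integral_of_le (by linarith), intervalIntegral.integral_of_le hR.le,
      integral_Icc_eq_integral_Ioc, integral_Icc_eq_integral_Ioc]
    rw [Set.disjoint_left]
    intro u hu hu'
    have h1 := hu.2
    have h2 := hu'.1
    linarith
  rw [← intervalIntegral.integral_comp_neg] at hsplit
  let f : ℂ → ℂ := fun w => Complex.exp (Complex.I * x * Complex.exp w - Complex.I * y * Complex.exp (-w))
  have hsub : ∀ g : ℝ → ℂ, ContinuousOn g (Set.Icc r R) →
      ∫ u in r..R, g u = ∫ t in (Real.log r)..(Real.log R), Real.exp t • g (Real.exp t) := by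
    intro g hg
    have := intervalIntegral.integral_deriv_smul_comp' (a := Real.log r) (b := Real.log R)
      (f := Real.exp) (f' := Real.exp) (g := g) (fun t _ => Real.hasDerivAt_exp t)
      Real.continuous_exp.continuousOn (hg.mono (by
        rintro _ ⟨t, ht, rfl⟩
        rw [Set.uIcc_of_le (Real.log_le_log hr hR.le)] at ht
        exact ⟨(Real.log_le_iff_le_exp hr).1 ht.1, (Real.le_log_iff_exp_le hR0).1 ht.2⟩))
    rw [Real.exp_log hr, Real.exp_log hR0] at this
    exact this.symm
  rw [hsub h hc1, hsub (fun u => h (-u)) (hc2.comp continuousOn_neg (fun u hu => by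
    simp only [Set.mem_Icc] at hu ⊢; constructor <;> linarith [hu.1, hu.2]))] at hsplit
  have hp : ∀ t : ℝ, Real.exp t • h (Real.exp t) = f (t + ((0 : ℝ) : ℂ) * Complex.I) := by
    intro t
    have ht : Complex.exp (t : ℂ) ≠ 0 := Complex.exp_ne_zero _
    simp only [h, f, Complex.real_smul, Complex.ofReal_exp, Complex.ofReal_zero, zero_mul, add_zero]
    rw [mul_div_cancel₀ _ ht, ← Complex.exp_add, Complex.exp_neg]
    congr 1; ring
  have hm : ∀ t : ℝ, Real.exp t • h (-Real.exp t) = - f (t + (Real.pi : ℂ) * Complex.I) := by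
    intro t
    have ht : Complex.exp (t : ℂ) ≠ 0 := Complex.exp_ne_zero _
    simp only [h, f, Complex.real_smul, Complex.ofReal_exp, Complex.ofReal_neg]
    rw [Complex.exp_neg, Complex.exp_add, Complex.exp_pi_mul_I, div_neg, mul_neg,
      mul_div_cancel₀ _ ht, ← Complex.exp_add]
    congr 2
    field_simp
    ring
  simp_rw [hp, hm] at hsplit
  have hrect := Complex.integral_boundary_rect_eq_zero_of_differentiableOn f
    ⟨Real.log r, 0⟩ ⟨Real.log R, Real.pi⟩ (by
      have : Differentiable ℂ f := by fun_prop
      exact this.differentiableOn)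
  have harc : ∀ ρ : ℝ, 0 < ρ → ∫ θ in (0 : ℝ)..Real.pi, f ((Real.log ρ : ℝ) + θ * Complex.I)
      = arcA (x * ρ) (y / ρ) := by
    intro ρ hρ
    unfold arcA
    congr 1; ext θ
    have hρ' : (ρ : ℂ) ≠ 0 := by exact_mod_cast hρ.ne'
    have e1 : Complex.exp ((Real.log ρ : ℝ) : ℂ) = ρ := by rw [← Complex.ofReal_exp, Real.exp_log hρ]
    simp only [f, arcF]
    rw [neg_add, Complex.exp_add, Complex.exp_add, Complex.exp_neg (Real.log ρ : ℂ), e1,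
      mul_comm (θ : ℂ) Complex.I]
    push_cast
    congr 1; ring
  simp only [smul_eq_mul] at hrect
  rw [harc r hr, harc R hR0] at hrect
  rw [hsplit, intervalIntegral.integral_neg]
  linear_combination hrect

lemma kerT_neg (x y R r : ℝ) (hr : 0 < r) (hR : r < R) :
    kerT (-x) (-y) R r = - kerT x y R r := by
  have hR0 : 0 < R := hr.trans hR
  rw [kerT_eq _ _ _ _ hr hR, kerT_eq _ _ _ _ hr hR]
  have h1 := arcA_add' (x * r) (y / r)
  have h2 := arcA_add' (x * R) (y / R)
  rw [show x * r * (y / r) = x * y by field_simp] at h1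
  rw [show x * R * (y / R) = x * y by field_simp] at h2
  rw [neg_mul, neg_mul, neg_div, neg_div]
  linear_combination Complex.I * (h1 - h2)

lemma kerT_eq' (x y R r : ℝ) (hr : 0 < r) (hR : r < R) :
    kerT x y R r = Complex.I * (((2 * Real.pi * besK (x * y) : ℝ) : ℂ)
      - arcA (-x * r) (-y / r) - arcA (x * R) (y / R)) := by
  rw [kerT_eq _ _ _ _ hr hR]
  have h1 := arcA_add' (x * r) (y / r)
  rw [show x * r * (y / r) = x * y by field_simp] at h1
  rw [neg_mul, neg_div]
  linear_combination Complex.I * h1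

lemma kerT_bound_pos (x y R r : ℝ) (hx : 0 ≤ x) (hr : 0 < r) (hR : r < R) :
    ‖kerT x y R r‖ ≤ 4 * Real.pi := by
  have hR0 : 0 < R := hr.trans hR
  have hpi := Real.pi_pos
  have hmono : x * r + y / r ≤ x * R + y / R ∨ 0 ≤ y := by
    rcases le_total 0 y with h | h
    · exact Or.inr h
    · left
      have h1 : x * r ≤ x * R := by gcongr
      have h2 : y / r ≤ y / R := by
        rw [div_le_div_iff₀ hr hR0]; nlinarith
      linarith
  have two : ∀ x y : ℝ, 0 ≤ x * r + y / r → 0 ≤ x * R + y / R → ‖kerT x y R r‖ ≤ 4 * Real.pi := by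
    intro x y h1 h2
    rw [kerT_eq _ _ _ _ hr hR, norm_mul, Complex.norm_I, one_mul]
    refine (norm_sub_le _ _).trans ?_
    linarith [arcA_norm_le _ _ h1, arcA_norm_le _ _ h2]
  rcases le_or_gt 0 y with hy | hy
  · exact two x y (by positivity) (by positivity)
  · have hm : x * r + y / r ≤ x * R + y / R := hmono.resolve_right (not_le.2 hy)
    rcases le_total 0 (x * r + y / r) with h1 | h1
    · exact two x y h1 (h1.trans hm)
    · rcases le_total 0 (x * R + y / R) with h2 | h2
      · rw [kerT_eq' _ _ _ _ hr hR, norm_mul, Complex.norm_I, one_mul]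
        refine (norm_sub_le _ _).trans ?_
        have h3 := norm_sub_le (((2 * Real.pi * besK (x * y) : ℝ) : ℂ)) (arcA (-x * r) (-y / r))
        have h4 := besK_bound (x * y) (mul_nonpos_of_nonneg_of_nonpos hx hy.le)
        have h5 := arcA_norm_le (-x * r) (-y / r) (by rw [neg_mul, neg_div]; linarith)
        have h6 := arcA_norm_le _ _ h2
        linarith
      · have := two (-x) (-y) (by rw [neg_mul, neg_div]; linarith) (by rw [neg_mul, neg_div]; linarith)
        rwa [kerT_neg _ _ _ _ hr hR, norm_neg] at this

lemma kerT_bound (x y R r : ℝ) (hr : 0 < r) (hR : r < R) :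
    ‖kerT x y R r‖ ≤ 4 * Real.pi := by
  rcases le_total 0 x with hx | hx
  · exact kerT_bound_pos x y R r hx hr hR
  · have := kerT_bound_pos (-x) (-y) R r (by linarith) hr hR
    rwa [kerT_neg _ _ _ _ hr hR, norm_neg] at this

lemma ev_lt : ∀ᶠ Rr : ℝ × ℝ in (atTop : Filter ℝ) ×ˢ nhdsWithin 0 (Set.Ioi 0), 0 < Rr.2 ∧ Rr.2 < Rr.1 := by
  have h1 : ∀ᶠ R : ℝ in atTop, 1 < R := eventually_gt_atTop 1
  have h2 : ∀ᶠ r : ℝ in nhdsWithin 0 (Set.Ioi 0), r ∈ Set.Ioo (0 : ℝ) 1 :=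
    Ioo_mem_nhdsGT one_pos
  filter_upwards [h1.prod_mk h2] with z hz
  exact ⟨hz.2.1, hz.2.2.trans hz.1⟩

lemma kerT_tendsto_pos (x y : ℝ) (hx : 0 ≤ x) :
    Tendsto (fun Rr : ℝ × ℝ => kerT x y Rr.1 Rr.2)
      ((atTop : Filter ℝ) ×ˢ nhdsWithin 0 (Set.Ioi 0))
      (nhds (Complex.I * ((2 * Real.pi * ((Real.sign x - Real.sign y) / 2) *
        J0 (2 * Real.sqrt |x * y|) : ℝ) : ℂ))) := by
  have hR := (arcA_atTop x y hx).comp (tendsto_fst (f := atTop) (g := nhdsWithin (0 : ℝ) (Set.Ioi 0)))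
  have hJ0 : J0 0 = 1 := by
    have := J0_eq 0 le_rfl
    simpa [besK_zero] using this
  rcases le_or_gt 0 y with hy | hy
  · have hr := (arcA_zero x y hy).comp (tendsto_snd (f := (atTop : Filter ℝ)) (g := nhdsWithin (0 : ℝ) (Set.Ioi 0)))
    have h := (hr.sub hR).const_mul Complex.I
    have hlim : Complex.I * ((2 * Real.pi * ((Real.sign x - Real.sign y) / 2) *
        J0 (2 * Real.sqrt |x * y|) : ℝ) : ℂ)
        = Complex.I * ((if y = 0 then (Real.pi : ℂ) else 0) - (if x = 0 then (Real.pi : ℂ) else 0)) := by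
      rcases hx.eq_or_lt with rfl | hx' <;> rcases hy.eq_or_lt with rfl | hy'
      · simp
      · simp [hJ0, Real.sign_of_pos hy', hy'.ne']
        ring
      · simp [hJ0, Real.sign_of_pos hx', hx'.ne']
        ring
      · simp [Real.sign_of_pos hx', Real.sign_of_pos hy', hx'.ne', hy'.ne']
    rw [hlim]
    refine h.congr' ?_
    filter_upwards [ev_lt] with z hz
    exact (kerT_eq x y z.1 z.2 hz.1 hz.2).symm
  · have hr := (arcA_zero (-x) (-y) (by linarith)).comp
      (tendsto_snd (f := (atTop : Filter ℝ)) (g := nhdsWithin (0 : ℝ) (Set.Ioi 0)))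
    have h := (((tendsto_const_nhds (x := ((2 * Real.pi * besK (x * y) : ℝ) : ℂ))).sub hr).sub hR).const_mul Complex.I
    have hlim : Complex.I * ((2 * Real.pi * ((Real.sign x - Real.sign y) / 2) *
        J0 (2 * Real.sqrt |x * y|) : ℝ) : ℂ)
        = Complex.I * (((2 * Real.pi * besK (x * y) : ℝ) : ℂ) - (if -y = 0 then (Real.pi : ℂ) else 0) - (if x = 0 then (Real.pi : ℂ) else 0)) := by
      rw [J0_eq _ (mul_nonpos_of_nonneg_of_nonpos hx hy.le)]
      rcases hx.eq_or_lt with rfl | hx'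
      · simp [besK_zero, Real.sign_of_neg hy, hy.ne]
        ring
      · simp [Real.sign_of_pos hx', Real.sign_of_neg hy, hx'.ne', hy.ne]
    rw [hlim]
    refine h.congr' ?_
    filter_upwards [ev_lt] with z hz
    exact (kerT_eq' x y z.1 z.2 hz.1 hz.2).symm

/-- for all `(x,y) ∈ ℝ²`, the principal value
`P∫ e^{ixu} e^{-iy/u} u⁻¹ du = 2πi ((sgn x - sgn y)/2) J₀(2√|xy|)`, and the
truncated integrals satisfy the uniform bound `| ∫_{I_{R,r}} | ≤ 4π`. -/
theorem pv_integral_kernel (x y : ℝ) :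
    Tendsto (fun Rr : ℝ × ℝ =>
        ∫ u in pvSet Rr.1 Rr.2,
          Complex.exp (Complex.I * (x : ℂ) * (u : ℂ)) *
            Complex.exp (-Complex.I * (y : ℂ) / (u : ℂ)) / (u : ℂ))
      ((atTop : Filter ℝ) ×ˢ nhdsWithin 0 (Set.Ioi 0))
      (nhds (Complex.I * ((2 * Real.pi * ((Real.sign x - Real.sign y) / 2) *
        J0 (2 * Real.sqrt |x * y|) : ℝ) : ℂ))) ∧
    (∀ R r : ℝ, 0 < r → r < R →
      ‖∫ u in pvSet R r,
          Complex.exp (Complex.I * (x : ℂ) * (u : ℂ)) *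
            Complex.exp (-Complex.I * (y : ℂ) / (u : ℂ)) / (u : ℂ)‖
        ≤ 4 * Real.pi) := by
  refine ⟨?_, fun R r hr hR => kerT_bound x y R r hr hR⟩
  change Tendsto (fun Rr : ℝ × ℝ => kerT x y Rr.1 Rr.2) _ _
  rcases le_total 0 x with hx | hx
  · exact kerT_tendsto_pos x y hx
  · have h := (kerT_tendsto_pos (-x) (-y) (by linarith)).neg
    have hlim : Complex.I * ((2 * Real.pi * ((Real.sign x - Real.sign y) / 2) *
        J0 (2 * Real.sqrt |x * y|) : ℝ) : ℂ)
        = -(Complex.I * ((2 * Real.pi * ((Real.sign (-x) - Real.sign (-y)) / 2) *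
        J0 (2 * Real.sqrt |(-x) * (-y)|) : ℝ) : ℂ)) := by
      rw [Real.sign_neg, Real.sign_neg, neg_mul_neg]
      push_cast; ring
    rw [hlim]
    refine h.congr' ?_
    filter_upwards [ev_lt] with z hz
    rw [kerT_neg _ _ _ _ hz.1 hz.2, neg_neg]
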